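/- arXiv:1706.00627 — 2 statements merged into one kernel-verified Lean document; each statement's English description precedes it below -/
import Mathlib

section
/- Every matricially normed space E is the image of a completely strictly coisometric operator whose domain is an \widehat{M}-composed matricially normed space; that is, there exist an \widehat{M}-composed space G and a completely strictly coisometric operator τ : G → E. -/
open scoped BigOperators
open Matrix

noncomputable section

/-- Block-diagonal sum `u ⊕ w` of two square matrices with entries in `E`. -/
def MatDSum {E : Type*} [Zero E] {m k : ℕ}
    (u : Matrix (Fin m) (Fin m) E) (w : Matrix (Fin k) (Fin k) E) :
    Matrix (Fin (m + k)) (Fin (m + k)) E :=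
  Matrix.reindex finSumFinEquiv finSumFinEquiv (Matrix.fromBlocks u 0 0 w)

/-- Left action `S·u` of a scalar matrix on an `E`-valued matrix. -/
def scalLeft {E : Type*} [AddCommMonoid E] [Module ℂ E] {m : ℕ}
    (S : Matrix (Fin m) (Fin m) ℂ) (u : Matrix (Fin m) (Fin m) E) :
    Matrix (Fin m) (Fin m) E :=
  Matrix.of fun i j => ∑ k, S i k • u k j

/-- Right action `u·S` of a scalar matrix on an `E`-valued matrix. -/
def scalRight {E : Type*} [AddCommMonoid E] [Module ℂ E] {m : ℕ}
    (u : Matrix (Fin m) (Fin m) E) (S : Matrix (Fin m) (Fin m) ℂ) :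
    Matrix (Fin m) (Fin m) E :=
  Matrix.of fun i j => ∑ k, S k j • u i k

/-- The operator norm `‖S‖_o` of a complex scalar matrix, i.e. its norm as an
operator on the euclidean (Hilbert) space `ℂⁿ`. -/
noncomputable def opNorm {m : ℕ} (S : Matrix (Fin m) (Fin m) ℂ) : ℝ :=
  ‖LinearMap.toContinuousLinearMap (Matrix.toEuclideanLin S)‖

/-- The `m`-th amplification of a map `φ : E → F`: apply `φ` entrywise. -/
def matAmpl {E F : Type*} (φ : E → F) {m : ℕ} (u : Matrix (Fin m) (Fin m) E) :
    Matrix (Fin m) (Fin m) F :=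
  Matrix.of fun i j => φ (u i j)

/-- The operator `φ^v : M_n → E`, `(λ_{ij}) ↦ Σ_{i,j} λ_{ji} • x_{ij}`, associated with
`v = (x_{ij}) ∈ M_n(E)`. -/
def matPhi {E : Type*} [AddCommMonoid E] [Module ℂ E] {n : ℕ}
    (v : Matrix (Fin n) (Fin n) E) (a : Matrix (Fin n) (Fin n) ℂ) : E :=
  ∑ i, ∑ j, a j i • v i j

/-- `ν` is a matrix-norm on the complex vector space `E`: each `ν m` is a norm on
`M_m(E)`, and Axioms 1 and 2 of Effros/Ruan hold. -/
def IsMatrixNorm {E : Type} [AddCommGroup E] [Module ℂ E]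
    (ν : ∀ m : ℕ, Matrix (Fin m) (Fin m) E → ℝ) : Prop :=
  (∀ (m : ℕ) (u v : Matrix (Fin m) (Fin m) E), ν m (u + v) ≤ ν m u + ν m v) ∧
  (∀ (m : ℕ) (c : ℂ) (u : Matrix (Fin m) (Fin m) E), ν m (c • u) = ‖c‖ * ν m u) ∧
  (∀ (m : ℕ) (u : Matrix (Fin m) (Fin m) E), ν m u = 0 ↔ u = 0) ∧
  (∀ (m k : ℕ) (u : Matrix (Fin m) (Fin m) E),
      ν (m + k) (MatDSum u (0 : Matrix (Fin k) (Fin k) E)) = ν m u) ∧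
  (∀ (m : ℕ) (S : Matrix (Fin m) (Fin m) ℂ) (u : Matrix (Fin m) (Fin m) E),
      ν m (scalLeft S u) ≤ opNorm S * ν m u) ∧
  (∀ (m : ℕ) (u : Matrix (Fin m) (Fin m) E) (S : Matrix (Fin m) (Fin m) ℂ),
      ν m (scalRight u S) ≤ ν m u * opNorm S)

/-- The set of values `‖(φ^v)_m(u)‖_m` over all proper couples `(E, v)`, i.e. over all
matricially normed spaces `E` and all `v` in the closed unit ball of `M_n(E)`. -/
def hatNormSet (n : ℕ) {m : ℕ}
    (u : Matrix (Fin m) (Fin m) (Matrix (Fin n) (Fin n) ℂ)) : Set ℝ :=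
  { r | ∃ (E : Type) (_ : AddCommGroup E) (_ : Module ℂ E)
        (ν : ∀ m' : ℕ, Matrix (Fin m') (Fin m') E → ℝ),
        IsMatrixNorm ν ∧
        ∃ v : Matrix (Fin n) (Fin n) E, ν n v ≤ 1 ∧ r = ν m (matAmpl (matPhi v) u) }

/-- The matrix-norm of the matricially normed space `M̂_n`:
`‖u‖_m = sup { ‖(φ^v)_m(u)‖_m : (E, v) a proper couple }`. -/
noncomputable def hatNorm (n : ℕ) {m : ℕ}
    (u : Matrix (Fin m) (Fin m) (Matrix (Fin n) (Fin n) ℂ)) : ℝ :=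
  sSup (hatNormSet n u)

/-- `φ` is a completely contractive (linear) operator between the matricially normed
spaces `(E, νE)` and `(F, νF)`: every amplification `φ_m` is contractive. -/
def IsCC {E F : Type} [AddCommGroup E] [Module ℂ E] [AddCommGroup F] [Module ℂ F]
    (νE : ∀ m : ℕ, Matrix (Fin m) (Fin m) E → ℝ)
    (νF : ∀ m : ℕ, Matrix (Fin m) (Fin m) F → ℝ) (φ : E → F) : Prop :=
  IsLinearMap ℂ φ ∧
  ∀ (m : ℕ) (u : Matrix (Fin m) (Fin m) E), νF m (matAmpl φ u) ≤ νE m u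

open DirectSum

/-- The `i`-th component matrix of a matrix with entries in a direct sum. -/
def compMat {ι : Type} {E : ι → Type} [∀ i, AddCommGroup (E i)] {m : ℕ}
    (u : Matrix (Fin m) (Fin m) (⨁ i, E i)) (i : ι) :
    Matrix (Fin m) (Fin m) (E i) :=
  Matrix.of fun a b => u a b i

/-- The matrix-norm of the matricial `ℓ¹`-sum of the family `(E i, ν i)`:
`‖⊕_i u_i‖_m = Σ_i ‖u_i‖_m` (a finite sum, since only finitely many components of a
matrix over the algebraic direct sum are nonzero). -/
noncomputable def l1Norm {ι : Type} {E : ι → Type} [∀ i, AddCommGroup (E i)]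
    (ν : ∀ i, ∀ m : ℕ, Matrix (Fin m) (Fin m) (E i) → ℝ)
    (m : ℕ) (u : Matrix (Fin m) (Fin m) (⨁ i, E i)) : ℝ :=
  ∑ᶠ i, ν i m (compMat u i)

/-- `τ` is a completely strictly coisometric operator between the matricially normed
spaces `(E, νE)` and `(F, νF)`: every amplification `τ_m` maps the closed unit ball of
`M_m(E)` onto the closed unit ball of `M_m(F)`. -/
def IsCSC {E F : Type} [AddCommGroup E] [Module ℂ E] [AddCommGroup F] [Module ℂ F]
    (νE : ∀ m : ℕ, Matrix (Fin m) (Fin m) E → ℝ)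
    (νF : ∀ m : ℕ, Matrix (Fin m) (Fin m) F → ℝ) (τ : E → F) : Prop :=
  IsLinearMap ℂ τ ∧
  ∀ m : ℕ, (fun u : Matrix (Fin m) (Fin m) E => matAmpl τ u) ''
      { u | νE m u ≤ 1 } = { w | νF m w ≤ 1 }

/-- The underlying space of an `M̂`-composed matricially normed space: the matricial
`ℓ¹`-sum of a family of spaces each of which is some `M̂_{d i}`. -/
abbrev HatComposed (ι : Type) (d : ι → ℕ) : Type :=
  ⨁ i : ι, Matrix (Fin (d i)) (Fin (d i)) ℂ

/-- The matrix-norm of the `M̂`-composed space `⊕_i M̂_{d i}`. -/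
noncomputable def hatComposedNorm (ι : Type) (d : ι → ℕ) :
    ∀ m : ℕ, Matrix (Fin m) (Fin m) (HatComposed ι d) → ℝ :=
  l1Norm (fun i m (u : Matrix (Fin m) (Fin m) (Matrix (Fin (d i)) (Fin (d i)) ℂ)) =>
    hatNorm (d i) u)

section Helpers

theorem scal_single {E : Type} [AddCommGroup E] [Module ℂ E] {m : ℕ}
    (v : Matrix (Fin m) (Fin m) E) (p i j q : Fin m) :
    scalLeft (Matrix.single p i (1 : ℂ)) (scalRight v (Matrix.single j q (1 : ℂ)))
      = Matrix.single p q (v i j) := by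
  ext a b
  simp only [scalLeft, scalRight, Matrix.of_apply, Matrix.single_apply]
  by_cases ha : p = a <;> by_cases hb : q = b <;> simp [ha, hb, ite_smul]

theorem dsum_single {E : Type} [AddCommGroup E] (k : ℕ) (x : E) :
    MatDSum (Matrix.of fun _ _ => x : Matrix (Fin 1) (Fin 1) E) (0 : Matrix (Fin k) (Fin k) E)
      = Matrix.single (Fin.castAdd k 0) (Fin.castAdd k 0) x := by
  ext a b
  refine Fin.addCases (fun a => ?_) (fun a => ?_) a <;>
  refine Fin.addCases (fun b => ?_) (fun b => ?_) b <;>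
  simp [MatDSum, Matrix.single_apply, Fin.ext_iff] <;> intros <;> omega

theorem mn_zero {E : Type} [AddCommGroup E] [Module ℂ E]
    {ν : ∀ m : ℕ, Matrix (Fin m) (Fin m) E → ℝ} (h : IsMatrixNorm ν) (m : ℕ) : ν m 0 = 0 :=
  (h.2.2.1 m 0).2 rfl

theorem mn_nonneg {E : Type} [AddCommGroup E] [Module ℂ E]
    {ν : ∀ m : ℕ, Matrix (Fin m) (Fin m) E → ℝ} (h : IsMatrixNorm ν) (m : ℕ)
    (u : Matrix (Fin m) (Fin m) E) : 0 ≤ ν m u := by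
  have h1 := h.1 m u ((-1 : ℂ) • u)
  rw [h.2.1] at h1
  simp [mn_zero h] at h1
  linarith

theorem mn_sum {E : Type} [AddCommGroup E] [Module ℂ E]
    {ν : ∀ m : ℕ, Matrix (Fin m) (Fin m) E → ℝ} (h : IsMatrixNorm ν) (m : ℕ)
    {ι : Type} (s : Finset ι) (u : ι → Matrix (Fin m) (Fin m) E) :
    ν m (∑ i ∈ s, u i) ≤ ∑ i ∈ s, ν m (u i) :=
  Finset.le_sum_of_subadditive (ν m) (mn_zero h m).le (h.1 m) s u

theorem opNorm_nonneg' {m : ℕ} (S : Matrix (Fin m) (Fin m) ℂ) : 0 ≤ opNorm S := norm_nonneg _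

theorem mn_two {E : Type} [AddCommGroup E] [Module ℂ E]
    {ν : ∀ m : ℕ, Matrix (Fin m) (Fin m) E → ℝ} (h : IsMatrixNorm ν) {m : ℕ}
    (S T : Matrix (Fin m) (Fin m) ℂ) (u : Matrix (Fin m) (Fin m) E) :
    ν m (scalLeft S (scalRight u T)) ≤ opNorm S * (ν m u * opNorm T) :=
  (h.2.2.2.2.1 m S _).trans
    (mul_le_mul_of_nonneg_left (h.2.2.2.2.2 m u T) (opNorm_nonneg' S))

theorem single_bound {n m : ℕ} (a b : Fin m) (i j : Fin n) :
    ∃ C : ℝ, ∀ (E : Type) (_ : AddCommGroup E) (_ : Module ℂ E)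
        (ν : ∀ m' : ℕ, Matrix (Fin m') (Fin m') E → ℝ), IsMatrixNorm ν →
        ∀ v : Matrix (Fin n) (Fin n) E, ν n v ≤ 1 → ν m (Matrix.single a b (v i j)) ≤ C := by
  obtain ⟨k, rfl⟩ : ∃ k, n = 1 + k := ⟨n - 1, by have := i.pos; omega⟩
  obtain ⟨l, rfl⟩ : ∃ l, m = 1 + l := ⟨m - 1, by have := a.pos; omega⟩
  refine ⟨opNorm (Matrix.single a (Fin.castAdd l 0) (1 : ℂ)) *
    ((opNorm (Matrix.single (Fin.castAdd k 0) i (1 : ℂ)) *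
      (1 * opNorm (Matrix.single j (Fin.castAdd k 0) (1 : ℂ)))) *
      opNorm (Matrix.single (Fin.castAdd l 0) b (1 : ℂ))), ?_⟩
  intro E _ _ ν h v hv
  have h1 := mn_two h (Matrix.single (Fin.castAdd k 0) i (1 : ℂ))
    (Matrix.single j (Fin.castAdd k 0) (1 : ℂ)) v
  rw [scal_single, ← dsum_single, h.2.2.2.1] at h1
  have h2 := mn_two h (Matrix.single a (Fin.castAdd l 0) (1 : ℂ))
    (Matrix.single (Fin.castAdd l 0) b (1 : ℂ))
    (Matrix.single (Fin.castAdd l 0) (Fin.castAdd l 0) (v i j))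
  rw [scal_single, Matrix.single_apply_same, ← dsum_single, h.2.2.2.1] at h2
  refine h2.trans (mul_le_mul_of_nonneg_left (mul_le_mul_of_nonneg_right (h1.trans ?_)
    (opNorm_nonneg' _)) (opNorm_nonneg' _))
  exact mul_le_mul_of_nonneg_left (mul_le_mul_of_nonneg_right hv (opNorm_nonneg' _))
    (opNorm_nonneg' _)

theorem ampl_eq {E : Type} [AddCommGroup E] [Module ℂ E] {n m : ℕ}
    (v : Matrix (Fin n) (Fin n) E)
    (u : Matrix (Fin m) (Fin m) (Matrix (Fin n) (Fin n) ℂ)) :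
    matAmpl (matPhi v) u
      = ∑ a, ∑ b, ∑ i, ∑ j, (u a b j i) • Matrix.single a b (v i j) := by
  ext p q
  simp only [matAmpl, matPhi, Matrix.of_apply, Matrix.sum_apply, Matrix.smul_apply,
    Matrix.single_apply]
  rw [Finset.sum_eq_single p, Finset.sum_eq_single q]
  · simp
  · intro b _ hb; simp [hb]
  · simp
  · intro b _ hb; simp [hb]
  · simp

theorem hat_bdd {n m : ℕ} (u : Matrix (Fin m) (Fin m) (Matrix (Fin n) (Fin n) ℂ)) :
    BddAbove (hatNormSet n u) := by
  choose C hC using fun (a b : Fin m) (i j : Fin n) => single_bound a b i j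
  refine ⟨∑ a, ∑ b, ∑ i, ∑ j, ‖u a b j i‖ * C a b i j, ?_⟩
  rintro r ⟨E, _, _, ν, h, v, hv, rfl⟩
  rw [ampl_eq]
  refine (mn_sum h m _ _).trans (Finset.sum_le_sum fun a _ => ?_)
  refine (mn_sum h m _ _).trans (Finset.sum_le_sum fun b _ => ?_)
  refine (mn_sum h m _ _).trans (Finset.sum_le_sum fun i _ => ?_)
  refine (mn_sum h m _ _).trans (Finset.sum_le_sum fun j _ => ?_)
  rw [h.2.1]
  exact mul_le_mul_of_nonneg_left (hC a b i j E _ _ ν h v hv) (norm_nonneg _)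

theorem le_hat {E : Type} [AddCommGroup E] [Module ℂ E]
    {ν : ∀ m : ℕ, Matrix (Fin m) (Fin m) E → ℝ} (h : IsMatrixNorm ν) {n m : ℕ}
    (v : Matrix (Fin n) (Fin n) E) (hv : ν n v ≤ 1)
    (u : Matrix (Fin m) (Fin m) (Matrix (Fin n) (Fin n) ℂ)) :
    ν m (matAmpl (matPhi v) u) ≤ hatNorm n u :=
  le_csSup (hat_bdd u) ⟨E, _, _, ν, h, v, hv, rfl⟩

theorem hat_zero (n m : ℕ) :
    hatNorm n (0 : Matrix (Fin m) (Fin m) (Matrix (Fin n) (Fin n) ℂ)) = 0 := by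
  have key : ∀ r ∈ hatNormSet n (0 : Matrix (Fin m) (Fin m) (Matrix (Fin n) (Fin n) ℂ)),
      r = 0 := by
    rintro r ⟨E, _, _, ν, h, v, hv, rfl⟩
    rw [ampl_eq]
    simp [mn_zero h]
  exact le_antisymm (Real.sSup_nonpos fun r hr => (key r hr).le)
    (Real.sSup_nonneg fun r hr => (key r hr).ge)

/-- The universal matrix in `M_n(M_n)`. -/
def univMat (n : ℕ) : Matrix (Fin n) (Fin n) (Matrix (Fin n) (Fin n) ℂ) :=
  Matrix.of fun i j => Matrix.single j i 1

theorem phi_univ {E : Type} [AddCommGroup E] [Module ℂ E] {n : ℕ}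
    (v : Matrix (Fin n) (Fin n) E) : matAmpl (matPhi v) (univMat n) = v := by
  ext p q
  simp only [matAmpl, matPhi, univMat, Matrix.of_apply, Matrix.single_apply]
  rw [Finset.sum_eq_single p, Finset.sum_eq_single q]
  · simp
  · intro b _ hb; simp [hb.symm]
  · simp
  · intro b _ hb; simp [hb.symm]
  · simp

theorem hat_univ (n : ℕ) : hatNorm n (univMat n) ≤ 1 := by
  refine Real.sSup_le ?_ zero_le_one
  rintro r ⟨E, _, _, ν, h, v, hv, rfl⟩
  rwa [phi_univ]

theorem phi_add {E : Type} [AddCommGroup E] [Module ℂ E] {n : ℕ}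
    (v : Matrix (Fin n) (Fin n) E) (a b : Matrix (Fin n) (Fin n) ℂ) :
    matPhi v (a + b) = matPhi v a + matPhi v b := by
  simp [matPhi, add_smul, Finset.sum_add_distrib]

theorem phi_smul {E : Type} [AddCommGroup E] [Module ℂ E] {n : ℕ}
    (v : Matrix (Fin n) (Fin n) E) (c : ℂ) (b : Matrix (Fin n) (Fin n) ℂ) :
    matPhi v (c • b) = c • matPhi v b := by
  simp [matPhi, Finset.smul_sum, mul_smul]

theorem phi_zero {E : Type} [AddCommGroup E] [Module ℂ E] {n : ℕ}
    (v : Matrix (Fin n) (Fin n) E) : matPhi v 0 = 0 := by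
  simp [matPhi]

theorem comp_finite {ι : Type} {E : ι → Type} [∀ i, AddCommGroup (E i)] {m : ℕ}
    (u : Matrix (Fin m) (Fin m) (⨁ i, E i)) :
    ∃ s : Finset ι, ∀ i ∉ s, compMat u i = 0 := by
  have hf : (⋃ a, ⋃ b, {i | u a b i ≠ 0}).Finite :=
    Set.finite_iUnion fun a => Set.finite_iUnion fun b => DFinsupp.finite_support (u a b)
  refine ⟨hf.toFinset, fun i hi => ?_⟩
  ext1 a b
  by_contra hne
  apply hi
  rw [Set.Finite.mem_toFinset]
  exact Set.mem_iUnion.2 ⟨a, Set.mem_iUnion.2 ⟨b, hne⟩⟩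

end Helpers

/-- **Theorem 5 (i).** Every matricially normed space `(E, νE)` is the image of a
completely strictly coisometric operator whose domain is an `M̂`-composed matricially
normed space. -/
theorem exists_csc_from_hatComposed (E : Type) [AddCommGroup E] [Module ℂ E]
    (νE : ∀ m : ℕ, Matrix (Fin m) (Fin m) E → ℝ) (hE : IsMatrixNorm νE) :
    ∃ (ι : Type) (d : ι → ℕ), (∀ i, 0 < d i) ∧
      ∃ τ : HatComposed ι d → E, IsCSC (hatComposedNorm ι d) νE τ := by
  classical
  let ι : Type := {p : Σ n : ℕ, Matrix (Fin n) (Fin n) E // 0 < p.1 ∧ νE p.1 p.2 ≤ 1}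
  let d : ι → ℕ := fun i => i.1.1
  let w : ∀ i : ι, Matrix (Fin (d i)) (Fin (d i)) E := fun i => i.1.2
  let τ : HatComposed ι d → E := fun x => ∑ᶠ i, matPhi (w i) (x i)
  have hfin : ∀ x : HatComposed ι d,
      (Function.support fun i => matPhi (w i) (x i)).Finite := by
    intro x
    refine (DFinsupp.finite_support x).subset fun i hi h0 => hi ?_
    have h0' : x i = 0 := h0
    simp only [h0', phi_zero]
  have hlin : IsLinearMap ℂ τ := by
    constructor
    · intro x y
      change (∑ᶠ i, matPhi (w i) ((x + y) i)) = _
      rw [← finsum_add_distrib (hfin x) (hfin y)]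
      refine finsum_congr fun i => ?_
      rw [DirectSum.add_apply, phi_add]
    · intro c x
      change (∑ᶠ i, matPhi (w i) ((c • x) i)) = _
      rw [smul_finsum' c (hfin x)]
      refine finsum_congr fun i => ?_
      rw [DirectSum.smul_apply, phi_smul]
  refine ⟨ι, d, fun i => i.2.1, τ, hlin, fun m => ?_⟩
  ext y
  simp only [Set.mem_image, Set.mem_ofPred_eq]
  constructor
  · rintro ⟨u, hu, rfl⟩
    refine le_trans ?_ hu
    obtain ⟨s, hs⟩ := comp_finite u
    have e1 : hatComposedNorm ι d m u = ∑ i ∈ s, hatNorm (d i) (compMat u i) := by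
      refine finsum_eq_sum_of_support_subset _ fun i hi => ?_
      by_contra hn
      exact hi (by simp only [hs i hn, hat_zero])
    have e2 : matAmpl τ u = ∑ i ∈ s, matAmpl (matPhi (w i)) (compMat u i) := by
      ext a b
      rw [Matrix.sum_apply]
      refine finsum_eq_sum_of_support_subset _ fun i hi => ?_
      by_contra hn
      have h0 : u a b i = 0 := congrFun (congrFun (hs i hn) a) b
      exact hi (by simp only [h0, phi_zero])
    rw [e1, e2]
    exact (mn_sum hE m _ _).trans
      (Finset.sum_le_sum fun i _ => le_hat hE (w i) i.2.2 (compMat u i))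
  · intro hy
    rcases Nat.eq_zero_or_pos m with rfl | hm
    · refine ⟨0, ?_, Subsingleton.elim _ _⟩
      have : hatComposedNorm ι d 0 0 = ∑ᶠ _ : ι, (0 : ℝ) := by
        refine finsum_congr fun i => ?_
        rw [Subsingleton.elim (compMat (0 : Matrix (Fin 0) (Fin 0) (HatComposed ι d)) i) 0]
        exact hat_zero _ _
      rw [this, finsum_zero]
      exact zero_le_one
    · let i₀ : ι := ⟨⟨m, y⟩, hm, hy⟩
      let u : Matrix (Fin m) (Fin m) (HatComposed ι d) := Matrix.of fun a b =>
        DirectSum.of (fun i : ι => Matrix (Fin (d i)) (Fin (d i)) ℂ) i₀ (univMat m a b)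
      have hsame : ∀ a b, u a b i₀ = univMat m a b := fun a b => DirectSum.of_eq_same _ _
      have hne : ∀ i, i ≠ i₀ → ∀ a b, u a b i = 0 := fun i hi a b =>
        DirectSum.of_eq_of_ne _ _ _ hi
      refine ⟨u, ?_, ?_⟩
      · have : hatComposedNorm ι d m u = hatNorm (d i₀) (compMat u i₀) := by
          refine finsum_eq_single _ i₀ fun i hi => ?_
          have : compMat u i = 0 := by
            ext1 a b
            exact hne i hi a b
          simp only [this, hat_zero]
        rw [this]
        have h2 : compMat u i₀ = univMat m := by
          ext1 a b
          exact hsame a b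
        rw [h2]
        exact hat_univ m
      · have h3 : matAmpl τ u = matAmpl (matPhi y) (univMat m) := by
          ext a b
          change (∑ᶠ i, matPhi (w i) (u a b i)) = _
          rw [finsum_eq_single _ i₀ fun i hi => by rw [hne i hi, phi_zero], hsame]
          rfl
        rw [h3, phi_univ]
end
end

section
/- A matricially normed space P is metrically projective if, and only if, P is a complete direct summand of an \widehat{M}-composed matricially normed space. -/
open scoped BigOperators
open Matrix

noncomputable section

open DirectSum

/-- The matricially normed space `(P, νP)` is metrically projective: for every
completely strictly coisometric operator `τ : E → F` between matricially normed spaces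
and every completely contractive operator `φ : P → F` there is a completely contractive
operator `ψ : P → E` with `τ ∘ ψ = φ`. -/
def MetricallyProjective {P : Type} [AddCommGroup P] [Module ℂ P]
    (νP : ∀ m : ℕ, Matrix (Fin m) (Fin m) P → ℝ) : Prop :=
  ∀ (E F : Type) (_ : AddCommGroup E) (_ : Module ℂ E) (_ : AddCommGroup F)
    (_ : Module ℂ F) (νE : ∀ m : ℕ, Matrix (Fin m) (Fin m) E → ℝ)
    (νF : ∀ m : ℕ, Matrix (Fin m) (Fin m) F → ℝ),
    IsMatrixNorm νE → IsMatrixNorm νF →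
    ∀ τ : E → F, IsCSC νE νF τ →
    ∀ φ : P → F, IsCC νP νF φ →
    ∃ ψ : P → E, IsCC νP νE ψ ∧ τ ∘ ψ = φ

/-- `(P, νP)` is a complete direct summand of `(G, νG)`: `P` is completely isometrically
isomorphic to a matricially normed subspace of `G` onto which there is a completely
contractive projection; equivalently, there are a completely isometric linear map
`α : P → G` and a completely contractive `π : G → P` with `π ∘ α = id`. -/
def IsCompleteDirectSummand {P G : Type} [AddCommGroup P] [Module ℂ P]
    [AddCommGroup G] [Module ℂ G]
    (νP : ∀ m : ℕ, Matrix (Fin m) (Fin m) P → ℝ)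
    (νG : ∀ m : ℕ, Matrix (Fin m) (Fin m) G → ℝ) : Prop :=
  ∃ (α : P → G) (π : G → P), IsLinearMap ℂ α ∧
    (∀ (m : ℕ) (u : Matrix (Fin m) (Fin m) P), νG m (matAmpl α u) = νP m u) ∧
    IsCC νG νP π ∧ π ∘ α = id

namespace MNS

section basics

variable {E : Type} [AddCommGroup E] [Module ℂ E]
  {ν : ∀ m : ℕ, Matrix (Fin m) (Fin m) E → ℝ}

lemma nu_zero (h : IsMatrixNorm ν) (m : ℕ) : ν m 0 = 0 := (h.2.2.1 m 0).2 rfl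

lemma nu_nonneg (h : IsMatrixNorm ν) (m : ℕ) (u : Matrix (Fin m) (Fin m) E) : 0 ≤ ν m u := by
  have h1 := h.1 m u ((-1 : ℂ) • u)
  rw [h.2.1 m (-1) u] at h1
  have : u + (-1 : ℂ) • u = 0 := by simp
  rw [this, nu_zero h] at h1
  simp at h1
  linarith

lemma nu_sum_le (h : IsMatrixNorm ν) (m : ℕ) {α : Type*} (s : Finset α)
    (f : α → Matrix (Fin m) (Fin m) E) : ν m (∑ i ∈ s, f i) ≤ ∑ i ∈ s, ν m (f i) := by
  classical
  induction s using Finset.induction_on with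
  | empty => simp [nu_zero h]
  | insert a s ha ih =>
    rw [Finset.sum_insert ha, Finset.sum_insert ha]
    exact (h.1 _ _ _).trans (by linarith)

/-- Zero padding of a matrix. -/
def pad {n : ℕ} (N : ℕ) (v : Matrix (Fin n) (Fin n) E) : Matrix (Fin N) (Fin N) E :=
  Matrix.of fun a b => if h : (a : ℕ) < n ∧ (b : ℕ) < n then v ⟨a, h.1⟩ ⟨b, h.2⟩ else 0

lemma nu_pad (h : IsMatrixNorm ν) {n N : ℕ} (hn : n ≤ N) (v : Matrix (Fin n) (Fin n) E) :
    ν N (pad N v) = ν n v := by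
  obtain ⟨k, rfl⟩ := Nat.exists_eq_add_of_le hn
  rw [← h.2.2.2.1 n k v]
  congr 1
  ext a b
  refine Fin.addCases (fun a => ?_) (fun a => ?_) a <;>
  refine Fin.addCases (fun b => ?_) (fun b => ?_) b <;>
  simp [pad, MatDSum]

lemma scalRight_single {m : ℕ} (u : Matrix (Fin m) (Fin m) E) (k l i j : Fin m) :
    scalRight u (Matrix.single k l 1) i j = if l = j then u i k else 0 := by
  simp only [scalRight, Matrix.of_apply, Matrix.single_apply]
  rw [Finset.sum_eq_single k]
  · by_cases hl : l = j <;> simp [hl]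
  · intro b _ hb
    simp [Ne.symm hb]
  · simp

lemma scalLeft_single {m : ℕ} (u : Matrix (Fin m) (Fin m) E) (k l i j : Fin m) :
    scalLeft (Matrix.single k l 1) u i j = if k = i then u l j else 0 := by
  simp only [scalLeft, Matrix.of_apply, Matrix.single_apply]
  rw [Finset.sum_eq_single l]
  · by_cases hl : k = i <;> simp [hl]
  · intro b _ hb
    simp [Ne.symm hb]
  · simp

/-- A constant depending only on the sizes and positions. -/
def cst {n m : ℕ} (i j : Fin n) (a b : Fin m) : ℝ :=
  opNorm (Matrix.single (⟨a, by omega⟩ : Fin (n + m)) (⟨i, by omega⟩ : Fin (n + m)) (1 : ℂ)) *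
  opNorm (Matrix.single (⟨j, by omega⟩ : Fin (n + m)) (⟨b, by omega⟩ : Fin (n + m)) (1 : ℂ))

lemma opNorm_nonneg {m : ℕ} (S : Matrix (Fin m) (Fin m) ℂ) : 0 ≤ opNorm S := norm_nonneg _

lemma cst_nonneg {n m : ℕ} (i j : Fin n) (a b : Fin m) : 0 ≤ cst i j a b :=
  mul_nonneg (opNorm_nonneg _) (opNorm_nonneg _)

lemma nu_single_le (h : IsMatrixNorm ν) {n m : ℕ} (v : Matrix (Fin n) (Fin n) E)
    (i j : Fin n) (a b : Fin m) :
    ν m (Matrix.single a b (v i j)) ≤ cst i j a b * ν n v := by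
  have e : pad (n + m) (Matrix.single a b (v i j)) =
      scalLeft (Matrix.single (⟨a, by omega⟩ : Fin (n + m)) (⟨i, by omega⟩ : Fin (n + m)) (1 : ℂ))
        (scalRight (pad (n + m) v)
        (Matrix.single (⟨j, by omega⟩ : Fin (n + m)) (⟨b, by omega⟩ : Fin (n + m)) (1 : ℂ))) := by
    ext x y
    rw [scalLeft_single, scalRight_single]
    simp only [pad, Matrix.of_apply, Matrix.single_apply, Fin.ext_iff]
    have := a.2
    have := b.2
    have := i.2
    have := j.2
    by_cases h1 : (a : ℕ) = x <;> by_cases h2 : (b : ℕ) = y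
    · have h3 : (x : ℕ) < m ∧ (y : ℕ) < m := by omega
      simp [h1, h2, h3]
    all_goals simp [h1, h2]
  rw [← nu_pad h (Nat.le_add_left m n), e, ← nu_pad h (Nat.le_add_right n m) v]
  refine (h.2.2.2.2.1 _ _ _).trans ?_
  refine (mul_le_mul_of_nonneg_left (h.2.2.2.2.2 _ _ _) (opNorm_nonneg _)).trans ?_
  rw [cst]
  exact le_of_eq (by ring)

/-- A bound for `hatNormSet`. -/
def bnd (n : ℕ) {m : ℕ} (u : Matrix (Fin m) (Fin m) (Matrix (Fin n) (Fin n) ℂ)) : ℝ :=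
  ∑ a, ∑ b, ∑ i, ∑ j, ‖u a b j i‖ * cst i j a b

lemma nu_le_bnd (h : IsMatrixNorm ν) {n m : ℕ} (v : Matrix (Fin n) (Fin n) E) (hv : ν n v ≤ 1)
    (u : Matrix (Fin m) (Fin m) (Matrix (Fin n) (Fin n) ℂ)) :
    ν m (matAmpl (matPhi v) u) ≤ bnd n u := by
  have e : matAmpl (matPhi v) u =
      ∑ a, ∑ b, ∑ i, ∑ j, u a b j i • Matrix.single a b (v i j) := by
    rw [Matrix.matrix_eq_sum_single (matAmpl (matPhi v) u)]
    refine Finset.sum_congr rfl fun a _ => Finset.sum_congr rfl fun b _ => ?_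
    simp only [matAmpl, matPhi, Matrix.of_apply, Matrix.smul_single]
    simp only [← Matrix.singleAddMonoidHom_apply, map_sum]
  rw [e]
  refine (nu_sum_le h _ _ _).trans (Finset.sum_le_sum fun a _ => ?_)
  refine (nu_sum_le h _ _ _).trans (Finset.sum_le_sum fun b _ => ?_)
  refine (nu_sum_le h _ _ _).trans (Finset.sum_le_sum fun i _ => ?_)
  refine (nu_sum_le h _ _ _).trans (Finset.sum_le_sum fun j _ => ?_)
  rw [h.2.1]
  refine mul_le_mul_of_nonneg_left ?_ (norm_nonneg _)
  refine (nu_single_le h v i j a b).trans ?_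
  exact mul_le_of_le_one_right (cst_nonneg _ _ _ _) hv

end basics

section opnorm

open scoped Matrix.Norms.L2Operator

lemma opNorm_eq {m : ℕ} (S : Matrix (Fin m) (Fin m) ℂ) : opNorm S = ‖S‖ := rfl

/-- The isometry used for padding. -/
def iso (m k : ℕ) : Matrix (Fin (m + k)) (Fin m) ℂ :=
  Matrix.of fun a b => if a = Fin.castAdd k b then 1 else 0

lemma iso_mul (m k : ℕ) : (iso m k)ᴴ * iso m k = 1 := by
  ext a b
  simp [iso, Matrix.mul_apply, Fin.sum_univ_add, Matrix.one_apply, eq_comm]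

lemma norm_one_le (m : ℕ) : ‖(1 : Matrix (Fin m) (Fin m) ℂ)‖ ≤ 1 := by
  rw [← Matrix.diagonal_one, Matrix.l2_opNorm_diagonal]
  exact (pi_norm_le_iff_of_nonneg zero_le_one).2 fun i => by simp

lemma norm_iso_le (m k : ℕ) : ‖iso m k‖ ≤ 1 := by
  have h := Matrix.l2_opNorm_conjTranspose_mul_self (iso m k)
  rw [iso_mul] at h
  have := norm_one_le m
  nlinarith [norm_nonneg (iso m k)]

lemma norm_iso_le' (m k : ℕ) : ‖(iso m k)ᴴ‖ ≤ 1 := by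
  rw [Matrix.l2_opNorm_conjTranspose]
  exact norm_iso_le m k

lemma dsum_eq {m k : ℕ} (u : Matrix (Fin m) (Fin m) ℂ) :
    MatDSum u (0 : Matrix (Fin k) (Fin k) ℂ) = iso m k * u * (iso m k)ᴴ := by
  have hne : ∀ (x : Fin k) (y : Fin m), ¬ Fin.natAdd m x = Fin.castAdd k y := fun x y h => by
    have := congrArg Fin.val h
    simp at this
    omega
  ext a b
  refine Fin.addCases (fun a => ?_) (fun a => ?_) a <;>
  refine Fin.addCases (fun b => ?_) (fun b => ?_) b <;>
  simp [iso, MatDSum, Matrix.mul_apply, hne]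

lemma isMatrixNorm_opNorm :
    IsMatrixNorm (E := ℂ) (fun m (u : Matrix (Fin m) (Fin m) ℂ) => opNorm u) := by
  refine ⟨fun m u v => norm_add_le u v, fun m c u => norm_smul c u, fun m u => norm_eq_zero (a := u),
    fun m k u => ?_, fun m S u => ?_, fun m u S => ?_⟩
  · simp only [opNorm_eq]
    apply le_antisymm
    · rw [dsum_eq]
      refine (Matrix.l2_opNorm_mul _ _).trans ?_
      refine (mul_le_of_le_one_right (norm_nonneg _) (norm_iso_le' m k)).trans ?_
      refine (Matrix.l2_opNorm_mul _ _).trans ?_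
      exact mul_le_of_le_one_left (norm_nonneg _) (norm_iso_le m k)
    · have e : u = (iso m k)ᴴ * MatDSum u (0 : Matrix (Fin k) (Fin k) ℂ) * iso m k := by
        rw [dsum_eq]
        simp only [Matrix.mul_assoc, iso_mul, Matrix.mul_one]
        rw [← Matrix.mul_assoc, iso_mul, Matrix.one_mul]
      conv_lhs => rw [e]
      refine (Matrix.l2_opNorm_mul _ _).trans ?_
      refine (mul_le_of_le_one_right (norm_nonneg _) (norm_iso_le m k)).trans ?_
      refine (Matrix.l2_opNorm_mul _ _).trans ?_
      exact mul_le_of_le_one_left (norm_nonneg _) (norm_iso_le' m k)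
  · have : scalLeft S u = S * u := by
      ext i j; simp [scalLeft, Matrix.mul_apply]
    rw [this]
    exact Matrix.l2_opNorm_mul S u
  · have : scalRight u S = u * S := by
      ext i j; simp [scalRight, Matrix.mul_apply, mul_comm]
    rw [this]
    exact Matrix.l2_opNorm_mul u S

end opnorm

section lin

variable {E F : Type} [AddCommGroup E] [Module ℂ E] [AddCommGroup F] [Module ℂ F]

/-- `φ^v` as a linear map. -/
def matPhiL {n : ℕ} (v : Matrix (Fin n) (Fin n) E) : Matrix (Fin n) (Fin n) ℂ →ₗ[ℂ] E where
  toFun := matPhi v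
  map_add' a b := by
    simp [matPhi, add_smul, Finset.sum_add_distrib]
  map_smul' c a := by
    simp [matPhi, Finset.smul_sum, mul_smul]

lemma matAmpl_add (f : E →ₗ[ℂ] F) {m : ℕ} (u v : Matrix (Fin m) (Fin m) E) :
    matAmpl f (u + v) = matAmpl f u + matAmpl f v := by
  ext i j; simp [matAmpl]

lemma matAmpl_smul (f : E →ₗ[ℂ] F) {m : ℕ} (c : ℂ) (u : Matrix (Fin m) (Fin m) E) :
    matAmpl f (c • u) = c • matAmpl f u := by
  ext i j; simp [matAmpl]

lemma matAmpl_zero (f : E →ₗ[ℂ] F) {m : ℕ} :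
    matAmpl f (0 : Matrix (Fin m) (Fin m) E) = 0 := by
  ext i j; simp [matAmpl]

lemma matAmpl_scalLeft (f : E →ₗ[ℂ] F) {m : ℕ} (S : Matrix (Fin m) (Fin m) ℂ)
    (u : Matrix (Fin m) (Fin m) E) :
    matAmpl f (scalLeft S u) = scalLeft S (matAmpl f u) := by
  ext i j; simp [matAmpl, scalLeft]

lemma matAmpl_scalRight (f : E →ₗ[ℂ] F) {m : ℕ} (S : Matrix (Fin m) (Fin m) ℂ)
    (u : Matrix (Fin m) (Fin m) E) :
    matAmpl f (scalRight u S) = scalRight (matAmpl f u) S := by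
  ext i j; simp [matAmpl, scalRight]

lemma matAmpl_dsum (f : E →ₗ[ℂ] F) {m k : ℕ} (u : Matrix (Fin m) (Fin m) E) :
    matAmpl f (MatDSum u (0 : Matrix (Fin k) (Fin k) E)) = MatDSum (matAmpl f u) 0 := by
  ext a b
  refine Fin.addCases (fun a => ?_) (fun a => ?_) a <;>
  refine Fin.addCases (fun b => ?_) (fun b => ?_) b <;>
  simp [matAmpl, MatDSum]

/-- The universal element. -/
def univ (n : ℕ) : Matrix (Fin n) (Fin n) (Matrix (Fin n) (Fin n) ℂ) :=
  Matrix.of fun i j => Matrix.single j i 1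

lemma matPhi_univ {n : ℕ} (a : Matrix (Fin n) (Fin n) ℂ) : matPhi (univ n) a = a := by
  conv_rhs => rw [Matrix.matrix_eq_sum_single a]
  rw [matPhi, Finset.sum_comm]
  simp [univ, Matrix.smul_single]

lemma matPhi_matAmpl (f : E →ₗ[ℂ] F) {n : ℕ} (v : Matrix (Fin n) (Fin n) E)
    (a : Matrix (Fin n) (Fin n) ℂ) : matPhi (matAmpl f v) a = f (matPhi v a) := by
  simp [matPhi, matAmpl]

lemma matAmpl_matPhi_univ {n : ℕ} (v : Matrix (Fin n) (Fin n) E) :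
    matAmpl (matPhi v) (univ n) = v := by
  ext i j
  simp only [matAmpl, matPhi, univ, Matrix.of_apply, Matrix.single_apply]
  rw [Finset.sum_eq_single i, Finset.sum_eq_single j]
  · simp
  · intro b _ hb; simp [hb.symm]
  · simp
  · intro b _ hb; simp [hb.symm]
  · simp

end lin

section hat

variable {n m : ℕ}

lemma bdd (u : Matrix (Fin m) (Fin m) (Matrix (Fin n) (Fin n) ℂ)) : BddAbove (hatNormSet n u) := by
  refine ⟨bnd n u, ?_⟩
  rintro r ⟨E, _, _, ν, hν, v, hv, rfl⟩
  exact nu_le_bnd hν v hv u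

lemma nonempty (u : Matrix (Fin m) (Fin m) (Matrix (Fin n) (Fin n) ℂ)) :
    (hatNormSet n u).Nonempty :=
  ⟨_, ℂ, inferInstance, inferInstance, _, isMatrixNorm_opNorm, 0,
    by rw [nu_zero isMatrixNorm_opNorm]; exact zero_le_one, rfl⟩

lemma le_hat {E : Type} [AddCommGroup E] [Module ℂ E]
    {ν : ∀ m : ℕ, Matrix (Fin m) (Fin m) E → ℝ} (hν : IsMatrixNorm ν)
    (v : Matrix (Fin n) (Fin n) E) (hv : ν n v ≤ 1)
    (u : Matrix (Fin m) (Fin m) (Matrix (Fin n) (Fin n) ℂ)) :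
    ν m (matAmpl (matPhi v) u) ≤ hatNorm n u :=
  le_csSup (bdd u) ⟨E, _, _, ν, hν, v, hv, rfl⟩

lemma hat_le (u : Matrix (Fin m) (Fin m) (Matrix (Fin n) (Fin n) ℂ)) (C : ℝ)
    (H : ∀ (E : Type) [AddCommGroup E] [Module ℂ E]
      (ν : ∀ m : ℕ, Matrix (Fin m) (Fin m) E → ℝ), IsMatrixNorm ν →
      ∀ v : Matrix (Fin n) (Fin n) E, ν n v ≤ 1 → ν m (matAmpl (matPhiL v) u) ≤ C) :
    hatNorm n u ≤ C := by
  refine csSup_le (nonempty u) ?_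
  rintro r ⟨E, i1, i2, ν, hν, v, hv, rfl⟩
  exact H E ν hν v hv

lemma le_hat' {E : Type} [AddCommGroup E] [Module ℂ E]
    {ν : ∀ m : ℕ, Matrix (Fin m) (Fin m) E → ℝ} (hν : IsMatrixNorm ν)
    (v : Matrix (Fin n) (Fin n) E) (hv : ν n v ≤ 1)
    (u : Matrix (Fin m) (Fin m) (Matrix (Fin n) (Fin n) ℂ)) :
    ν m (matAmpl (matPhiL v) u) ≤ hatNorm n u := le_hat hν v hv u

lemma hat_nonneg (u : Matrix (Fin m) (Fin m) (Matrix (Fin n) (Fin n) ℂ)) : 0 ≤ hatNorm n u :=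
  (nu_nonneg isMatrixNorm_opNorm _ _).trans (le_hat' isMatrixNorm_opNorm 0
    (by rw [nu_zero isMatrixNorm_opNorm]; exact zero_le_one) u)

lemma hat_univ_le (n : ℕ) : hatNorm n (univ n) ≤ 1 := by
  refine hat_le _ _ fun E _ _ ν hν v hv => ?_
  have : matAmpl (matPhiL v) (univ n) = v := matAmpl_matPhi_univ v
  rw [this]; exact hv

lemma hat_smul_le (c : ℂ) (u : Matrix (Fin m) (Fin m) (Matrix (Fin n) (Fin n) ℂ)) :
    hatNorm n (c • u) ≤ ‖c‖ * hatNorm n u := by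
  refine hat_le _ _ fun E _ _ ν hν v hv => ?_
  rw [matAmpl_smul, hν.2.1]
  exact mul_le_mul_of_nonneg_left (le_hat' hν v hv u) (norm_nonneg _)

lemma hat_zero : hatNorm n (0 : Matrix (Fin m) (Fin m) (Matrix (Fin n) (Fin n) ℂ)) = 0 := by
  refine le_antisymm (hat_le _ _ fun E _ _ ν hν v hv => ?_) (hat_nonneg _)
  rw [matAmpl_zero, nu_zero hν]

lemma hat_eq_zero (u : Matrix (Fin m) (Fin m) (Matrix (Fin n) (Fin n) ℂ))
    (hu : hatNorm n u = 0) : u = 0 := by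
  ext a b i j
  set s : Matrix (Fin n) (Fin n) ℂ := Matrix.single j i 1 with hs
  set c : ℝ := (opNorm s + 1)⁻¹ with hc
  have hpos : 0 < opNorm s + 1 := by linarith [opNorm_nonneg s]
  have hcp : 0 < c := inv_pos.2 hpos
  have hv : opNorm ((c : ℂ) • s) ≤ 1 := by
    have := isMatrixNorm_opNorm.2.1 n (c : ℂ) s
    simp only at this
    rw [this, Complex.norm_real, Real.norm_of_nonneg hcp.le, hc, inv_mul_le_iff₀ hpos]
    linarith
  have h1 := le_hat' isMatrixNorm_opNorm ((c : ℂ) • s) hv u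
  rw [hu] at h1
  have h2 := (isMatrixNorm_opNorm.2.2.1 _ _).1 (le_antisymm h1 (nu_nonneg isMatrixNorm_opNorm _ _))
  have h3 := congrFun (congrFun h2 a) b
  have h4 : matPhi ((c : ℂ) • s) (u a b) = c * u a b i j := by
    simp only [matPhi, hs, Matrix.smul_apply, Matrix.single_apply]
    rw [Finset.sum_eq_single j, Finset.sum_eq_single i]
    · simp [mul_comm]
    · intro b _ hb; simp [hb.symm]
    · simp
    · intro b _ hb; simp [hb.symm]
    · simp
  have h5 : (c : ℂ) * u a b i j = 0 := h4 ▸ h3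
  rcases mul_eq_zero.1 h5 with h6 | h6
  · exact absurd h6 (by exact_mod_cast hcp.ne')
  · simpa using h6

lemma isMatrixNorm_hat (n : ℕ) : IsMatrixNorm (E := Matrix (Fin n) (Fin n) ℂ)
    (fun m (u : Matrix (Fin m) (Fin m) (Matrix (Fin n) (Fin n) ℂ)) => hatNorm n u) := by
  refine ⟨fun m u v => ?_, fun m c u => ?_, fun m u => ?_, fun m k u => ?_, fun m S u => ?_,
    fun m u S => ?_⟩
  · refine hat_le _ _ fun E _ _ ν hν x hx => ?_
    rw [matAmpl_add]
    exact (hν.1 _ _ _).trans (add_le_add (le_hat' hν x hx u) (le_hat' hν x hx v))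
  · refine le_antisymm (hat_smul_le c u) ?_
    rcases eq_or_ne c 0 with rfl | hc
    · simp [hat_nonneg]
    · have := hat_smul_le c⁻¹ (c • u)
      rw [inv_smul_smul₀ hc, norm_inv] at this
      rwa [le_inv_mul_iff₀ (norm_pos_iff.2 hc)] at this
  · exact ⟨hat_eq_zero u, fun h => h ▸ hat_zero⟩
  · refine le_antisymm (hat_le _ _ fun E _ _ ν hν x hx => ?_)
      (hat_le _ _ fun E _ _ ν hν x hx => ?_)
    · rw [matAmpl_dsum, hν.2.2.2.1]
      exact le_hat' hν x hx u
    · rw [← hν.2.2.2.1 m k, ← matAmpl_dsum]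
      exact le_hat' hν x hx _
  · refine hat_le _ _ fun E _ _ ν hν x hx => ?_
    rw [matAmpl_scalLeft]
    exact (hν.2.2.2.2.1 _ _ _).trans
      (mul_le_mul_of_nonneg_left (le_hat' hν x hx u) (opNorm_nonneg _))
  · refine hat_le _ _ fun E _ _ ν hν x hx => ?_
    rw [matAmpl_scalRight]
    exact (hν.2.2.2.2.2 _ _ _).trans
      (mul_le_mul_of_nonneg_right (le_hat' hν x hx u) (opNorm_nonneg _))

end hat

section l1

variable {ι : Type} {E : ι → Type} [∀ i, AddCommGroup (E i)] [∀ i, Module ℂ (E i)]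
  {ν : ∀ i, ∀ m : ℕ, Matrix (Fin m) (Fin m) (E i) → ℝ}

lemma compMat_eq {m : ℕ} (u : Matrix (Fin m) (Fin m) (⨁ i, E i)) (i : ι) :
    compMat u i = matAmpl (DirectSum.component ℂ ι E i) u := rfl

lemma exists_supp {m : ℕ} (u : Matrix (Fin m) (Fin m) (⨁ i, E i)) :
    ∃ s : Finset ι, ∀ i ∉ s, compMat u i = 0 := by
  classical
  refine ⟨Finset.univ.biUnion fun a => Finset.univ.biUnion fun b => DFinsupp.support (u a b), ?_⟩
  intro i hi
  ext a b
  simp only [Finset.mem_biUnion, Finset.mem_univ, true_and, not_exists] at hi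
  have := hi a b
  rwa [DFinsupp.notMem_support_iff] at this

lemma l1_eq (h : ∀ i, IsMatrixNorm (ν i)) {m : ℕ} (u : Matrix (Fin m) (Fin m) (⨁ i, E i))
    (s : Finset ι) (hs : ∀ i ∉ s, compMat u i = 0) :
    l1Norm ν m u = ∑ i ∈ s, ν i m (compMat u i) := by
  rw [l1Norm]
  refine finsum_eq_sum_of_support_subset _ ?_
  intro i hi
  by_contra hn
  exact hi (by simp only [hs i hn, nu_zero (h i)])

lemma isMatrixNorm_l1 (h : ∀ i, IsMatrixNorm (ν i)) : IsMatrixNorm (E := ⨁ i, E i) (l1Norm ν) := by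
  classical
  refine ⟨fun m u v => ?_, fun m c u => ?_, fun m u => ?_, fun m k u => ?_, fun m S u => ?_,
    fun m u S => ?_⟩
  · obtain ⟨s, hs⟩ := exists_supp u
    obtain ⟨t, ht⟩ := exists_supp v
    have e : ∀ i, compMat (u + v) i = compMat u i + compMat v i := fun i => by
      simp only [compMat_eq, matAmpl_add]
    rw [l1_eq h u (s ∪ t) (fun i hi => hs i fun h => hi (Finset.mem_union_left _ h)),
      l1_eq h v (s ∪ t) (fun i hi => ht i fun h => hi (Finset.mem_union_right _ h)),
      l1_eq h (u + v) (s ∪ t), ← Finset.sum_add_distrib]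
    · exact Finset.sum_le_sum fun i _ => by rw [e]; exact (h i).1 _ _ _
    · intro i hi
      rw [e, hs i fun h => hi (Finset.mem_union_left _ h),
        ht i fun h => hi (Finset.mem_union_right _ h), add_zero]
  · have e : ∀ i, compMat (c • u) i = c • compMat u i := fun i => by
      simp only [compMat_eq, matAmpl_smul]
    simp only [l1Norm, e, (h _).2.1, mul_finsum]
  · obtain ⟨s, hs⟩ := exists_supp u
    rw [l1_eq h u s hs, Finset.sum_eq_zero_iff_of_nonneg fun i _ => nu_nonneg (h i) _ _]
    constructor
    · intro H
      ext a b i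
      have : compMat u i = 0 := by
        by_cases hi : i ∈ s
        · exact ((h i).2.2.1 _ _).1 (H i hi)
        · exact hs i hi
      exact congrFun (congrFun this a) b
    · rintro rfl i _
      rw [compMat_eq, matAmpl_zero, nu_zero (h i)]
  · simp only [l1Norm, compMat_eq, matAmpl_dsum, (h _).2.2.2.1]
  · obtain ⟨s, hs⟩ := exists_supp u
    have e : ∀ i, compMat (scalLeft S u) i = scalLeft S (compMat u i) := fun i => by
      simp only [compMat_eq, matAmpl_scalLeft]
    rw [l1_eq h u s hs, l1_eq h _ s, Finset.mul_sum]
    · exact Finset.sum_le_sum fun i _ => by rw [e]; exact (h i).2.2.2.2.1 _ _ _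
    · intro i hi
      rw [e, hs i hi]
      ext; simp [scalLeft]
  · obtain ⟨s, hs⟩ := exists_supp u
    have e : ∀ i, compMat (scalRight u S) i = scalRight (compMat u i) S := fun i => by
      simp only [compMat_eq, matAmpl_scalRight]
    rw [l1_eq h u s hs, l1_eq h _ s, Finset.sum_mul]
    · exact Finset.sum_le_sum fun i _ => by rw [e]; exact (h i).2.2.2.2.2 _ _ _
    · intro i hi
      rw [e, hs i hi]
      ext; simp [scalRight]

lemma l1_lof [DecidableEq ι] (h : ∀ i, IsMatrixNorm (ν i)) {m : ℕ} (i : ι)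
    (u : Matrix (Fin m) (Fin m) (E i)) :
    l1Norm ν m (matAmpl (DirectSum.lof ℂ ι E i) u) = ν i m u := by
  rw [l1Norm, finsum_eq_single _ i]
  · congr 1
    ext a b
    simp [compMat, matAmpl, DirectSum.lof_eq_of]
  · intro j hj
    have : compMat (matAmpl (DirectSum.lof ℂ ι E i) u) j = 0 := by
      ext a b
      simp only [compMat, matAmpl, DirectSum.lof_eq_of, Matrix.of_apply, Matrix.zero_apply]
      exact DirectSum.of_eq_of_ne _ _ _ hj
    rw [this, nu_zero (h j)]

lemma l1_toModule [DecidableEq ι] (h : ∀ i, IsMatrixNorm (ν i)) {F : Type} [AddCommGroup F]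
    [Module ℂ F] {νF : ∀ m : ℕ, Matrix (Fin m) (Fin m) F → ℝ} (hF : IsMatrixNorm νF)
    (f : ∀ i, E i →ₗ[ℂ] F)
    (hf : ∀ i m (u : Matrix (Fin m) (Fin m) (E i)), νF m (matAmpl (f i) u) ≤ ν i m u) :
    IsCC (l1Norm ν) νF (DirectSum.toModule ℂ ι F f) := by
  refine ⟨LinearMap.isLinear _, fun m u => ?_⟩
  obtain ⟨s, hs⟩ := exists_supp u
  have e : matAmpl (DirectSum.toModule ℂ ι F f) u = ∑ i ∈ s, matAmpl (f i) (compMat u i) := by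
    ext a b
    rw [Matrix.sum_apply]
    simp only [matAmpl, compMat, Matrix.of_apply]
    have h1 : u a b = ∑ i ∈ s, DirectSum.lof ℂ ι E i (u a b i) := by
      ext j
      rw [DFinsupp.finsetSum_apply]
      by_cases hj : j ∈ s
      · rw [Finset.sum_eq_single j]
        · simp [DirectSum.lof_eq_of]
        · intro i _ hi
          rw [DirectSum.lof_eq_of]
          exact DirectSum.of_eq_of_ne _ _ _ hi.symm
        · exact fun h => absurd hj h
      · rw [Finset.sum_eq_zero]
        · exact congrFun (congrFun (hs j hj) a) b
        · intro i hi
          rw [DirectSum.lof_eq_of]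
          exact DirectSum.of_eq_of_ne _ _ _ (fun h => hj (h ▸ hi))
    conv_lhs => rw [h1]
    simp only [map_sum, DirectSum.toModule_lof]
  rw [e, l1_eq h u s hs]
  exact (nu_sum_le hF _ _ _).trans (Finset.sum_le_sum fun i _ => hf i m _)

end l1

lemma proj_of_summand (P : Type) [AddCommGroup P] [Module ℂ P]
    (νP : ∀ m : ℕ, Matrix (Fin m) (Fin m) P → ℝ) (ι : Type) (d : ι → ℕ)
    (H : IsCompleteDirectSummand νP (hatComposedNorm ι d)) : MetricallyProjective νP := by
  classical
  obtain ⟨α, π, hα, hiso, hπ, hid⟩ := H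
  intro E F _ _ _ _ νE νF hE hF τ hτ φ hφ
  let τL : E →ₗ[ℂ] F := hτ.1.mk'
  let φL : HatComposed ι d →ₗ[ℂ] F := hφ.1.mk' ∘ₗ hπ.1.mk'
  have hφL : ∀ m (u : Matrix (Fin m) (Fin m) (HatComposed ι d)),
      νF m (matAmpl φL u) ≤ hatComposedNorm ι d m u := fun m u =>
    (hφ.2 m (matAmpl π u)).trans (hπ.2 m u)
  have key : ∀ i, ∃ v : Matrix (Fin (d i)) (Fin (d i)) E, νE (d i) v ≤ 1 ∧
      matAmpl τ v = matAmpl (φL ∘ₗ DirectSum.lof ℂ ι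
        (fun i => Matrix (Fin (d i)) (Fin (d i)) ℂ) i) (univ (d i)) := by
    intro i
    have h1 : νF (d i) (matAmpl (φL ∘ₗ DirectSum.lof ℂ ι
        (fun i => Matrix (Fin (d i)) (Fin (d i)) ℂ) i) (univ (d i))) ≤ 1 := by
      refine (hφL _ (matAmpl (DirectSum.lof ℂ ι
        (fun i => Matrix (Fin (d i)) (Fin (d i)) ℂ) i) (univ (d i)))).trans ?_
      rw [hatComposedNorm, l1_lof fun i => isMatrixNorm_hat (d i)]
      exact hat_univ_le _
    have h2 := (hτ.2 (d i)).symm.subset h1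
    obtain ⟨v, hv, hv'⟩ := h2
    exact ⟨v, hv, hv'⟩
  choose v hv hv' using key
  let ψ : HatComposed ι d →ₗ[ℂ] E := DirectSum.toModule ℂ ι E fun i => matPhiL (v i)
  have hψ : IsCC (hatComposedNorm ι d) νE ψ :=
    l1_toModule (fun i => isMatrixNorm_hat (d i)) hE _ fun i m u => le_hat' hE (v i) (hv i) u
  have hcomp : τL ∘ₗ ψ = φL := by
    refine DirectSum.linearMap_ext _ fun i => LinearMap.ext fun a => ?_
    have e1 : ψ (DirectSum.lof ℂ ι (fun i => Matrix (Fin (d i)) (Fin (d i)) ℂ) i a)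
        = matPhi (v i) a := DirectSum.toModule_lof _ _ _
    simp only [LinearMap.comp_apply]
    rw [e1, ← matPhi_matAmpl τL]
    have e2 : matAmpl τL (v i) = _ := hv' i
    rw [e2, matPhi_matAmpl, matPhi_univ]
    rfl
  refine ⟨ψ ∘ α, ⟨(ψ ∘ₗ hα.mk').isLinear, fun m u => ?_⟩, ?_⟩
  · exact (hψ.2 m (matAmpl α u)).trans (hiso m u).le
  · funext x
    have h1 := LinearMap.congr_fun hcomp (α x)
    have h2 : π (α x) = x := congrFun hid x
    have h3 : τ (ψ (α x)) = φ (π (α x)) := h1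
    rw [h2] at h3
    exact h3

lemma summand_of_proj (P : Type) [AddCommGroup P] [Module ℂ P]
    (νP : ∀ m : ℕ, Matrix (Fin m) (Fin m) P → ℝ) (hP : IsMatrixNorm νP)
    (H : MetricallyProjective νP) :
    ∃ (ι : Type) (d : ι → ℕ), (∀ i, 0 < d i) ∧
        IsCompleteDirectSummand νP (hatComposedNorm ι d) := by
  classical
  let ι : Type := Σ n : ℕ, {v : Matrix (Fin (n + 1)) (Fin (n + 1)) P // νP (n + 1) v ≤ 1}
  let d : ι → ℕ := fun i => i.1 + 1
  refine ⟨ι, d, fun i => Nat.succ_pos _, ?_⟩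
  have hh : ∀ i : ι, IsMatrixNorm (E := Matrix (Fin (d i)) (Fin (d i)) ℂ)
    (fun m u => hatNorm (d i) u) := fun i => isMatrixNorm_hat (d i)
  have hG : IsMatrixNorm (hatComposedNorm ι d) := isMatrixNorm_l1 hh
  let f : ∀ i : ι, Matrix (Fin (d i)) (Fin (d i)) ℂ →ₗ[ℂ] P := fun i => matPhiL i.2.1
  let τ : HatComposed ι d →ₗ[ℂ] P := DirectSum.toModule ℂ ι P f
  have hτ : IsCC (hatComposedNorm ι d) νP τ :=
    l1_toModule hh hP f fun i m u => le_hat' hP i.2.1 i.2.2 u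
  have hcsc : IsCSC (hatComposedNorm ι d) νP τ := by
    refine ⟨τ.isLinear, fun m => Set.Subset.antisymm ?_ ?_⟩
    · rintro _ ⟨u, hu, rfl⟩
      exact (hτ.2 m u).trans hu
    · intro w hw
      rcases m with _ | n
      · refine ⟨0, ?_, Subsingleton.elim _ _⟩
        simp only [Set.mem_ofPred_eq]
        rw [nu_zero hG]; exact zero_le_one
      · let i : ι := ⟨n, w, hw⟩
        refine ⟨matAmpl (DirectSum.lof ℂ ι (fun i => Matrix (Fin (d i)) (Fin (d i)) ℂ) i)
          (univ (n + 1)), ?_, ?_⟩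
        · have := l1_lof hh i (univ (n + 1))
          simp only [Set.mem_ofPred_eq]
          refine (le_of_eq this).trans (hat_univ_le _)
        · refine Eq.trans ?_ (matAmpl_matPhi_univ w)
          ext a b
          exact DirectSum.toModule_lof (φ := f) ℂ i _
  obtain ⟨ψ, hψ, hc⟩ := H _ _ _ _ _ _ _ _ hG hP τ hcsc id ⟨LinearMap.id.isLinear, fun m u => le_rfl⟩
  refine ⟨ψ, τ, hψ.1, fun m u => le_antisymm (hψ.2 m u) ?_, hτ, hc⟩
  have h1 := hτ.2 m (matAmpl ψ u)
  have h2 : matAmpl τ (matAmpl ψ u) = u := by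
    ext a b
    exact congrFun hc (u a b)
  rwa [h2] at h1

end MNS

/-- **Theorem 5 (ii).** A matricially normed space is metrically projective if, and only
if, it is a complete direct summand of an `M̂`-composed matricially normed space. -/
theorem metricallyProjective_iff (P : Type) [AddCommGroup P] [Module ℂ P]
    (νP : ∀ m : ℕ, Matrix (Fin m) (Fin m) P → ℝ) (hP : IsMatrixNorm νP) :
    MetricallyProjective νP ↔
      ∃ (ι : Type) (d : ι → ℕ), (∀ i, 0 < d i) ∧
        IsCompleteDirectSummand νP (hatComposedNorm ι d) := by
  constructor
  · exact MNS.summand_of_proj P νP hP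
  · rintro ⟨ι, d, -, H⟩
    exact MNS.proj_of_summand P νP ι d H
end
end
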